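/- For every n ≥ 0, the diamond graph satisfies c₁(TC(D^{⊘n})) ≥ ((2−√2)/4)·n. -/

import Mathlib

open Finset MeasureTheory

open Finset MeasureTheory

/-- The transportation cost norm of a zero-total-mass signed measure `μ` (represented as a
function `V → ℝ`) on a finite metric space with distance `d`: the infimum of costs of
transportation plans representing `μ`. -/
noncomputable def TCnorm {V : Type*} [Fintype V] [DecidableEq V]
    (d : V → V → ℝ) (μ : V → ℝ) : ℝ :=
  sInf { c : ℝ | ∃ (n : ℕ) (a : Fin n → ℝ) (x y : Fin n → V),
    (∀ i, 0 ≤ a i) ∧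
    (∀ z : V, μ z = ∑ i, a i * ((if x i = z then (1 : ℝ) else 0) -
      (if y i = z then (1 : ℝ) else 0))) ∧
    c = ∑ i, a i * d (x i) (y i) }

/-- The `L₁`-distortion of a space `M` equipped with a distance function `ρ`:
the infimum of `D ≥ 1` such that there is a measure space `(Ω, ν)` and a map
`f : M → L₁(ν)` with `ρ x y ≤ ‖f x - f y‖₁ ≤ D * ρ x y` for all `x, y`. -/
noncomputable def c1OfDist {M : Type*} (ρ : M → M → ℝ) : ℝ :=
  sInf { D : ℝ | 1 ≤ D ∧ ∃ (Ω : Type) (_ : MeasurableSpace Ω) (ν : Measure Ω)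
    (f : M → Lp ℝ 1 ν), ∀ x y : M,
      ρ x y ≤ dist (f x) (f y) ∧ dist (f x) (f y) ≤ D * ρ x y }

/-- The `L₁`-distortion of the transportation cost space `TC(V, d)`, i.e. of the space of
zero-total-mass signed measures on `V` with the metric induced by the transportation cost
norm. -/
noncomputable def c1TC {V : Type*} [Fintype V] [DecidableEq V] (d : V → V → ℝ) : ℝ :=
  c1OfDist (fun μ ν : {μ : V → ℝ // ∑ x, μ x = 0} => TCnorm d (fun x => μ.1 x - ν.1 x))

/-- The support of a signed measure given as a function. -/
def msupp {V : Type*} (μ : V → ℝ) : Set V := {x | μ x ≠ 0}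

/-- Diameter of a set with respect to a distance function. -/
noncomputable def sDiam {V : Type*} (d : V → V → ℝ) (S : Set V) : ℝ :=
  sSup { c : ℝ | ∃ x ∈ S, ∃ y ∈ S, c = d x y }

/-- Distance between two sets with respect to a distance function. -/
noncomputable def sDist {V : Type*} (d : V → V → ℝ) (S T : Set V) : ℝ :=
  sInf { c : ℝ | ∃ x ∈ S, ∃ y ∈ T, c = d x y }
/-- A finite weighted directed graph with distinguished source and sink vertices, edge
lengths, and an edge thickness function. This is the underlying data of an `st`-graph. -/
structure WGraph : Type 1 where
  /-- vertex set -/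
  V : Type
  /-- edge index set -/
  ι : Type
  finV : Fintype V
  decV : DecidableEq V
  finι : Fintype ι
  decι : DecidableEq ι
  /-- initial vertex of an edge -/
  src : ι → V
  /-- terminal vertex of an edge -/
  dst : ι → V
  /-- length of an edge -/
  len : ι → ℝ
  /-- thickness of an edge -/
  th : ι → ℝ
  /-- source vertex -/
  s : V
  /-- sink vertex -/
  t : V

attribute [instance] WGraph.finV WGraph.decV WGraph.finι WGraph.decι

namespace WGraph

/-- Initial vertex of a step (an edge traversed forwards or backwards). -/
def stepSrc (G : WGraph) (p : G.ι × Bool) : G.V := if p.2 then G.src p.1 else G.dst p.1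

/-- Terminal vertex of a step. -/
def stepDst (G : WGraph) (p : G.ι × Bool) : G.V := if p.2 then G.dst p.1 else G.src p.1

/-- `G.IsWalk x y l` : the list of steps `l` forms a walk from `x` to `y` in the underlying
undirected graph of `G`. -/
def IsWalk (G : WGraph) : G.V → G.V → List (G.ι × Bool) → Prop
  | x, y, [] => x = y
  | x, y, p :: l => G.stepSrc p = x ∧ G.IsWalk (G.stepDst p) y l

/-- `G.IsDiWalk x y l` : the list of edges `l` forms a directed walk from `x` to `y`. -/
def IsDiWalk (G : WGraph) : G.V → G.V → List G.ι → Prop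
  | x, y, [] => x = y
  | x, y, e :: l => G.src e = x ∧ G.IsDiWalk (G.dst e) y l

/-- The length of a directed walk. -/
def diLen (G : WGraph) (l : List G.ι) : ℝ := (l.map G.len).sum

/-- The weighted shortest-path metric of `G`. -/
noncomputable def gdist (G : WGraph) (x y : G.V) : ℝ :=
  sInf { c : ℝ | ∃ l : List (G.ι × Bool), G.IsWalk x y l ∧
    c = (l.map fun p => G.len p.1).sum }

end WGraph

/-- `G` is an `st`-graph: it has positive edge lengths and thicknesses, it is connected,
its weighted shortest-path metric satisfies `d(s,t) = 1`, every directed path is a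
geodesic, and the thickness function is witnessed by a finite nonempty family of directed
edge paths from `s` to `t` via `th(e) = |{i : e ∈ γ_i}| / |I|`. -/
structure IsSTGraph (G : WGraph) : Prop where
  s_ne_t : G.s ≠ G.t
  len_pos : ∀ e, 0 < G.len e
  th_pos : ∀ e, 0 < G.th e
  conn : ∀ x y : G.V, ∃ l, G.IsWalk x y l
  dist_st : G.gdist G.s G.t = 1
  dir_geodesic : ∀ (x y : G.V) (l : List G.ι), G.IsDiWalk x y l → G.gdist x y = G.diLen l
  th_witness : ∃ (m : ℕ) (γ : Fin (m + 1) → List G.ι),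
    (∀ i, G.IsDiWalk G.s G.t (γ i)) ∧
    ∀ e : G.ι, G.th e = ((Finset.univ.filter fun i => e ∈ γ i).card : ℝ) / (m + 1)

/-- `G` is an `st`-path: it consists of a single directed path from `s` to `t`, and all
edges have thickness `1`. -/
def IsSTPath (G : WGraph) : Prop :=
  ∃ (k : ℕ) (E : Fin k ≃ G.ι) (v : Fin (k + 1) → G.V),
    Function.Bijective v ∧ v 0 = G.s ∧ v (Fin.last k) = G.t ∧
    (∀ i : Fin k, G.src (E i) = v i.castSucc ∧ G.dst (E i) = v i.succ) ∧
    (∀ e, G.th e = 1)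

namespace WGraph

/-- The map sending a vertex of `H` to the corresponding vertex of `G ⊘ H` obtained by
replacing the edge `e` of `G` with a copy of `H` (where `s_H` is identified with the
initial vertex of `e` and `t_H` with the terminal vertex of `e`). -/
def slashEmbed (G H : WGraph) (e : G.ι) (v : H.V) :
    G.V ⊕ (G.ι × {v : H.V // v ≠ H.s ∧ v ≠ H.t}) :=
  if hs : v = H.s then Sum.inl (G.src e)
  else if ht : v = H.t then Sum.inl (G.dst e)
  else Sum.inr (e, ⟨v, hs, ht⟩)

/-- The slash product `G ⊘ H`: every edge of `G` is replaced by a copy of `H`. New edge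
lengths and thicknesses are the products of the corresponding ones of `G` and `H`. -/
def slash (G H : WGraph) : WGraph where
  V := G.V ⊕ (G.ι × {v : H.V // v ≠ H.s ∧ v ≠ H.t})
  ι := G.ι × H.ι
  finV := inferInstance
  decV := inferInstance
  finι := inferInstance
  decι := inferInstance
  src := fun p => slashEmbed G H p.1 (H.src p.2)
  dst := fun p => slashEmbed G H p.1 (H.dst p.2)
  len := fun p => G.len p.1 * H.len p.2
  th := fun p => G.th p.1 * H.th p.2
  s := Sum.inl G.s
  t := Sum.inl G.t

/-- The trivial `st`-path: a single directed edge from `s` to `t` of length 1 and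
thickness 1. -/
def edgeGraph : WGraph where
  V := Bool
  ι := Unit
  finV := inferInstance
  decV := inferInstance
  finι := inferInstance
  decι := inferInstance
  src := fun _ => false
  dst := fun _ => true
  len := fun _ => 1
  th := fun _ => 1
  s := false
  t := true

/-- Slash powers: `G^{⊘0}` is a single directed edge from `s` to `t` of length 1 and
thickness 1, and `G^{⊘(n+1)} = G^{⊘n} ⊘ G`. -/
def slashPow (G : WGraph) : ℕ → WGraph
  | 0 => edgeGraph
  | n + 1 => (G.slashPow n).slash G

end WGraph

/-- The diamond `st`-graph `D`: two directed paths of two edges each from `s` to `t`,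
sharing only `s` and `t`, all four edges of length `1/2` and thickness `1/2`.
Vertices: `0 = s`, `1 = t`, `2`, `3`. -/
noncomputable def diamond : WGraph where
  V := Fin 4
  ι := Fin 4
  finV := inferInstance
  decV := inferInstance
  finι := inferInstance
  decι := inferInstance
  src := ![0, 2, 0, 3]
  dst := ![2, 1, 3, 1]
  len := fun _ => 1 / 2
  th := fun _ => 1 / 2
  s := 0
  t := 1

/-!
Averaging a Lipschitz map `f : TC(X) → L₁` over long segments of the lattice of integer charges
makes it locally almost additive, while its growth along any fixed charge survives on average.
Hence an inequality between sums of `L₁` norms which holds for all additive maps into `ℝ`, and so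
for all additive maps into `L₁`, can be transferred to `f`.

The inequality bounds the average of `|∑ v, charge ω v * F v|` by `(1 + √2 / 2) * ∑ e, |drop F e|`,
for a random charge on `D^{⊘n}` all of whose values have transportation cost norm at least `n / 4`
times the total length of the edges. The charge comes with edge weights, whose quadratic form is
controlled by the same inequality. From one level to the next the weights are alternately spread
evenly over each copy of `D` and moved to a random side of it. In the latter case dipoles with
random signs are added at the midpoints: they raise the transportation cost norm by half the total
length, but by the orthogonality of the signs they enter the inequality only through the quadratic
form.
-/

open Filter Topology fwdDiff

/-! ### Almost additive approximation -/

lemma sum_fwdDiff_nsmul {G E : Type*} [AddCommGroup G] [AddCommGroup E]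
    (K : ℕ) (e : G) (f : G → E) (x : G) : ∑ j ∈ range K, Δ_[e] f (x + j • e) = Δ_[K • e] f x := by
  simpa [fwdDiff, add_assoc, succ_nsmul] using sum_range_sub (fun j ↦ f (x + j • e)) K

section ShiftAverage

variable {G E : Type*} [AddCommGroup G] [NormedAddCommGroup E] [NormedSpace ℝ E]

/-- The average of `f` over the translates of its argument by `0, e, …, (K - 1) • e`. -/
noncomputable def shiftAverage (K : ℕ) (e : G) (f : G → E) (x : G) : E :=
  (K : ℝ)⁻¹ • ∑ j ∈ range K, f (x + j • e)

lemma fwdDiff_shiftAverage (K : ℕ) (e w : G) (f : G → E) :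
    Δ_[w] (shiftAverage K e f) = shiftAverage K e (Δ_[w] f) := by
  ext x
  simp only [fwdDiff, shiftAverage, sum_sub_distrib, smul_sub, add_right_comm]

lemma fwdDiff_shiftAverage_self (K : ℕ) (e : G) (f : G → E) :
    Δ_[e] (shiftAverage K e f) = (K : ℝ)⁻¹ • Δ_[K • e] f := by
  ext x
  rw [fwdDiff_shiftAverage, shiftAverage, sum_fwdDiff_nsmul, Pi.smul_apply]

lemma shiftAverage_comm (K L : ℕ) (e v : G) (f : G → E) :
    shiftAverage K e (shiftAverage L v f) = shiftAverage L v (shiftAverage K e f) := by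
  ext x
  simp only [shiftAverage, smul_sum]
  rw [sum_comm]
  simp only [smul_comm (K : ℝ)⁻¹ (L : ℝ)⁻¹, add_right_comm]

lemma norm_shiftAverage_le {c : ℝ} (K : ℕ) (e : G) {f : G → E} (hf : ∀ x, ‖f x‖ ≤ c) (x : G) :
    ‖shiftAverage K e f x‖ ≤ c := by
  have hc : 0 ≤ c := (norm_nonneg _).trans (hf 0)
  rcases K.eq_zero_or_pos with rfl | hK
  · simpa [shiftAverage] using hc
  · rw [shiftAverage, norm_smul, norm_inv, RCLike.norm_natCast, inv_mul_le_iff₀ (by positivity)]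
    simpa using norm_sum_le_of_le (range K) fun j _ ↦ hf (x + j • e)

lemma norm_shiftAverage_sub_le {c : G → ℝ} {K : ℕ} (hK : 0 < K) (e : G) {f : G → E}
    (hf : ∀ w x, ‖Δ_[w] f x‖ ≤ c w) (x : G) :
    ‖shiftAverage K e f x - f x‖ ≤ (K : ℝ)⁻¹ * ∑ j ∈ range K, c (j • e) := by
  have hK' : (K : ℝ) ≠ 0 := by positivity
  have h : shiftAverage K e f x - f x = (K : ℝ)⁻¹ • ∑ j ∈ range K, Δ_[j • e] f x := by
    simp [shiftAverage, fwdDiff, smul_sub, ← Nat.cast_smul_eq_nsmul ℝ, smul_smul, hK']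
  rw [h, norm_smul, norm_inv, RCLike.norm_natCast]
  gcongr
  exact norm_sum_le_of_le _ fun j _ ↦ hf _ x

lemma sum_le_of_le_shiftAverage {J : Type*} (S : Finset J) {R : ℕ} (hR : 0 < R) (φ : J → G)
    (b : J → ℝ) (u : J → G → ℝ) {T : ℝ} (hb : ∀ j ∈ S, ∀ x, b j ≤ shiftAverage R (φ j) (u j) x)
    (hT : ∀ x, ∑ j ∈ S, u j x ≤ T) : ∑ j ∈ S, b j ≤ T := by
  classical
  induction S using Finset.induction_on generalizing u T with
  | empty => simpa using hT 0
  | insert a S ha ih =>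
    have hbS : ∀ j ∈ S, ∀ x, b j ≤ shiftAverage R (φ j) (shiftAverage R (φ a) (u j)) x := by
      intro j hj x
      have hR' : (0 : ℝ) < R := by positivity
      rw [shiftAverage_comm, shiftAverage, smul_eq_mul, le_inv_mul_iff₀ hR']
      simpa using card_nsmul_le_sum (range R) _ _ fun i _ ↦
        hb j (mem_insert_of_mem hj) (x + i • φ a)
    have hTS : ∀ x, ∑ j ∈ S, shiftAverage R (φ a) (u j) x ≤ T - b a := by
      intro x
      have hR' : (0 : ℝ) < R := by positivity
      have hsum : shiftAverage R (φ a) (u a) x + ∑ j ∈ S, shiftAverage R (φ a) (u j) x ≤ T := by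
        simp only [shiftAverage, ← smul_sum, ← smul_add]
        rw [sum_comm, ← sum_add_distrib, smul_eq_mul, inv_mul_le_iff₀ hR']
        simpa [sum_insert ha] using sum_le_card_nsmul (range R) _ _ fun i _ ↦ hT (x + i • φ a)
      linarith [hb a (mem_insert_self a S) x]
    rw [sum_insert ha]
    linarith [ih _ hbS hTS]

lemma exists_fwdDiff_almost_invariant {B : G → ℝ} {f : G → E} (hf : ∀ w x, ‖Δ_[w] f x‖ ≤ B w)
    (S : Finset G) {K : ℕ} (hK : 0 < K) :
    ∃ g : G → E, (∀ w x, ‖Δ_[w] g x‖ ≤ B w) ∧ (∃ c, ∀ x, ‖g x - f x‖ ≤ c) ∧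
      ∀ v ∈ S, ∀ w x, ‖Δ_[w] (Δ_[v] g) x‖ ≤ 2 * B w / K := by
  classical
  induction S using Finset.induction_on with
  | empty => exact ⟨f, hf, ⟨0, by simp⟩, by simp⟩
  | insert a S _ ih =>
    obtain ⟨g, hgB, ⟨c, hc⟩, hgS⟩ := ih
    refine ⟨shiftAverage K a g, fun w x ↦ ?_,
      ⟨(K : ℝ)⁻¹ * ∑ j ∈ range K, B (j • a) + c, fun x ↦ ?_⟩, fun v hv w x ↦ ?_⟩
    · rw [fwdDiff_shiftAverage]
      exact norm_shiftAverage_le K a (hgB w) x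
    · rw [← sub_add_sub_cancel _ (g x)]
      exact norm_add_le_of_le (norm_shiftAverage_sub_le hK a hgB x) (hc x)
    · rcases mem_insert.1 hv with rfl | hv
      · have hcomm : Δ_[w] (Δ_[v] (shiftAverage K v g)) x =
            (K : ℝ)⁻¹ • (Δ_[w] g (x + K • v) - Δ_[w] g x) := by
          rw [fwdDiff_shiftAverage_self, fwdDiff_const_smul, Pi.smul_apply]
          simp only [fwdDiff, add_right_comm x w]
          congr 1
          abel
        rw [hcomm, norm_smul, norm_inv, RCLike.norm_natCast, inv_mul_eq_div, two_mul]
        gcongr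
        exact norm_sub_le_of_le (hgB w _) (hgB w x)
      · rw [fwdDiff_shiftAverage, fwdDiff_shiftAverage]
        exact norm_shiftAverage_le K a (hgS v hv w) x

end ShiftAverage

lemma sum_le_of_fwdDiff_of_bounded_sub {G E J : Type*} [AddCommGroup G] [NormedAddCommGroup E]
    [Fintype J] {φ : J → G} {b : J → ℝ} {f g : G → E} {c T : ℝ}
    (hgf : ∀ x, ‖g x - f x‖ ≤ c)
    (hb : ∀ j (R : ℕ) x, R * b j ≤ ‖Δ_[R • φ j] f x‖)
    (hT : ∀ x, ∑ j, ‖Δ_[φ j] g x‖ ≤ T) : ∑ j, b j ≤ T := by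
  have hR : ∀ R : ℕ, 0 < R → ∑ j, (b j - 2 * c / R) ≤ T := by
    intro R hR
    have hR' : (0 : ℝ) < R := by positivity
    refine sum_le_of_le_shiftAverage univ hR φ _ (fun j x ↦ ‖Δ_[φ j] g x‖) (fun j _ x ↦ ?_) hT
    have hclose : ‖Δ_[R • φ j] f x‖ ≤ ‖Δ_[R • φ j] g x‖ + 2 * c := by
      have h : Δ_[R • φ j] f x =
          Δ_[R • φ j] g x - ((g (x + R • φ j) - f (x + R • φ j)) - (g x - f x)) := by
        simp only [fwdDiff]; abel
      rw [h, two_mul]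
      exact norm_sub_le_of_le le_rfl (norm_sub_le_of_le (hgf _) (hgf x))
    have htel : ‖Δ_[R • φ j] g x‖ ≤ ∑ i ∈ range R, ‖Δ_[φ j] g (x + i • φ j)‖ := by
      rw [← sum_fwdDiff_nsmul]; exact norm_sum_le _ _
    rw [shiftAverage, smul_eq_mul, le_inv_mul_iff₀ hR', mul_sub, mul_div_cancel₀ _ hR'.ne']
    linarith [hb j R x]
  have hlim : Tendsto (fun R : ℕ ↦ ∑ j, (b j - 2 * c / R)) atTop (𝓝 (∑ j, (b j - 0))) :=
    tendsto_finsetSum _ fun j _ ↦ (tendsto_const_div_atTop_nhds_zero_nat _).const_sub _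
  simpa using le_of_tendsto hlim ((eventually_gt_atTop 0).mono hR)

lemma tendsto_sub_sub_of_closure_eq_top {I G E : Type*} [AddCommGroup G] [NormedAddCommGroup E]
    {l : Filter I} {S : Set G} (hS : AddSubgroup.closure S = ⊤) {A : I → G → E} {L : I → G →+ E}
    (hA : ∀ v ∈ S, ∀ x, Tendsto (fun i ↦ A i (x + v) - A i x - L i v) l (𝓝 0)) (w x : G) :
    Tendsto (fun i ↦ A i (x + w) - A i x - L i w) l (𝓝 0) := by
  have hw : w ∈ AddSubgroup.closure S := hS ▸ AddSubgroup.mem_top w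
  induction hw using AddSubgroup.closure_induction generalizing x with
  | mem v hv => exact hA v hv x
  | zero => simpa using tendsto_const_nhds
  | add v w _ _ ihv ihw =>
    rw [← add_zero (0 : E)]
    refine ((ihv x).add (ihw (x + v))).congr fun i ↦ ?_
    rw [(L i).map_add, add_assoc x]
    abel
  | neg v _ ih =>
    rw [← neg_zero (G := E)]
    refine (ih (x + -v)).neg.congr fun i ↦ ?_
    rw [(L i).map_neg, neg_add_cancel_right]
    abel

section Linearization

variable {G E : Type*} [AddCommGroup G] [Module.Free ℤ G] [Module.Finite ℤ G]
  [NormedAddCommGroup E] [NormedSpace ℝ E] {f : G → E} {B : G → ℝ}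

lemma exists_locally_almost_additive (hB : ∀ w x, ‖Δ_[w] f x‖ ≤ B w) (W : Finset G)
    {ε : ℝ} (hε : 0 < ε) :
    ∃ g : G → E, (∀ w x, ‖Δ_[w] g x‖ ≤ B w) ∧ (∃ c, ∀ x, ‖g x - f x‖ ≤ c) ∧
      ∀ x, ∃ L : G →+ E, ∀ w ∈ W, ‖Δ_[w] g x - L w‖ ≤ ε := by
  classical
  let β := Module.Free.chooseBasis ℤ G
  choose g hgB hgf hgβ using fun K : ℕ ↦
    exists_fwdDiff_almost_invariant hB (univ.image β) K.succ_pos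
  let L (p : ℕ × G) : G →+ E := (β.constr ℤ fun v ↦ Δ_[β v] (g p.1) p.2).toAddMonoidHom
  have hclosure : AddSubgroup.closure (Set.range β) = ⊤ := by
    rw [← Submodule.span_int_eq_addSubgroupClosure, β.span_eq, Submodule.top_toAddSubgroup]
  have hβ : ∀ v ∈ Set.range β, ∀ x, Tendsto
      (fun p : ℕ × G ↦ g p.1 (p.2 + (x + v)) - g p.1 (p.2 + x) - L p v) (atTop ×ˢ ⊤) (𝓝 0) := by
    rintro _ ⟨v, rfl⟩ x
    refine squeeze_zero_norm (a := fun p ↦ 2 * B x / (p.1 + 1 : ℕ)) (fun p ↦ ?_) ?_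
    · have h : g p.1 (p.2 + (x + β v)) - g p.1 (p.2 + x) - L p (β v) =
          Δ_[x] (Δ_[β v] (g p.1)) p.2 := by
        simp [L, fwdDiff, add_assoc]
      exact h ▸ hgβ p.1 (β v) (mem_image_of_mem _ (mem_univ v)) x p.2
    · exact ((tendsto_const_div_atTop_nhds_zero_nat _).comp (tendsto_add_atTop_nat 1)).comp
        tendsto_fst
  have hW : ∀ᶠ p : ℕ × G in atTop ×ˢ ⊤, ∀ w ∈ W, ‖Δ_[w] (g p.1) p.2 - L p w‖ ≤ ε := by
    refine (eventually_all_finset W).2 fun w _ ↦ ?_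
    have h := tendsto_sub_sub_of_closure_eq_top (A := fun (p : ℕ × G) u ↦ g p.1 (p.2 + u))
      hclosure hβ w 0
    simp only [zero_add, add_zero] at h
    exact h.norm.eventually_le_const (by simpa using hε)
  rw [← principal_univ, eventually_prod_principal_iff] at hW
  obtain ⟨K, hK⟩ := hW.exists
  exact ⟨g K, hgB K, hgf K, fun x ↦ ⟨L (K, x), hK x (Set.mem_univ x)⟩⟩

theorem sum_le_of_forall_addMonoidHom {J ι : Type*} [Fintype J] [Fintype ι] {C : ℝ} (hC : 0 ≤ C)
    {φ : J → G} {ψ : ι → G} (hL : ∀ L : G →+ E, ∑ j, ‖L (φ j)‖ ≤ C * ∑ i, ‖L (ψ i)‖)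
    {b : J → ℝ} (hB : ∀ w x, ‖Δ_[w] f x‖ ≤ B w) (hb : ∀ j (R : ℕ) x, R * b j ≤ ‖Δ_[R • φ j] f x‖) :
    ∑ j, b j ≤ C * ∑ i, B (ψ i) := by
  classical
  set N : ℝ := Fintype.card J + C * Fintype.card ι + 1 with hN
  have hNpos : 0 < N := by positivity
  refine le_of_forall_pos_le_add fun ε hε ↦ ?_
  obtain ⟨g, hgB, ⟨c, hgf⟩, hg⟩ := exists_locally_almost_additive hB
    (univ.image φ ∪ univ.image ψ) (div_pos hε hNpos)
  refine sum_le_of_fwdDiff_of_bounded_sub hgf hb fun x ↦ ?_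
  obtain ⟨L, hgL⟩ := hg x
  have hφ (j : J) : ‖Δ_[φ j] g x‖ ≤ ‖L (φ j)‖ + ε / N := by
    linarith [norm_le_norm_add_norm_sub' (Δ_[φ j] g x) (L (φ j)), hgL (φ j) (by simp)]
  have hψ (i : ι) : ‖L (ψ i)‖ ≤ B (ψ i) + ε / N := by
    linarith [norm_le_norm_add_norm_sub (Δ_[ψ i] g x) (L (ψ i)), hgL (ψ i) (by simp),
      hgB (ψ i) x]
  calc ∑ j, ‖Δ_[φ j] g x‖ ≤ ∑ j, (‖L (φ j)‖ + ε / N) := sum_le_sum fun j _ ↦ hφ j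
    _ ≤ C * ∑ i, ‖L (ψ i)‖ + Fintype.card J * (ε / N) := by
        simpa [sum_add_distrib] using hL L
    _ ≤ C * ∑ i, (B (ψ i) + ε / N) + Fintype.card J * (ε / N) := by gcongr with i; exact hψ i
    _ = C * ∑ i, B (ψ i) + (N - 1) * (ε / N) := by
        simp only [sum_add_distrib, sum_const, card_univ, nsmul_eq_mul, hN]; ring
    _ ≤ C * ∑ i, B (ψ i) + ε := by
        rw [sub_mul, mul_div_cancel₀ _ hNpos.ne']
        linarith [div_pos hε hNpos]

end Linearization

lemma sum_norm_le_of_forall_real {G J ι Ω : Type*} [AddCommGroup G] [Countable G] [Fintype J]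
    [Fintype ι] {_ : MeasurableSpace Ω} {ν : Measure Ω} {C : ℝ} {φ : J → G} {ψ : ι → G}
    (hℝ : ∀ L : G →+ ℝ, ∑ j, |L (φ j)| ≤ C * ∑ i, |L (ψ i)|) (L : G →+ Lp ℝ 1 ν) :
    ∑ j, ‖L (φ j)‖ ≤ C * ∑ i, ‖L (ψ i)‖ := by
  have hadd : ∀ᵐ ω ∂ν, ∀ v w, L (v + w) ω = L v ω + L w ω := by
    simp only [ae_all_iff]
    intro v w
    rw [L.map_add]
    exact Lp.coeFn_add (L v) (L w)
  have hint (w : G) : Integrable (fun ω ↦ ‖L w ω‖) ν := (L1.integrable_coeFn (L w)).norm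
  simp only [L1.norm_eq_integral_norm]
  rw [← integral_finsetSum _ fun j _ ↦ hint _, ← integral_finsetSum _ fun i _ ↦ hint _,
    ← integral_const_mul]
  refine integral_mono_ae (integrable_finsetSum _ fun j _ ↦ hint _)
    ((integrable_finsetSum _ fun i _ ↦ hint _).const_mul C) ?_
  filter_upwards [hadd] with ω hω
  exact hℝ (AddMonoidHom.mk' (fun w ↦ L w ω) hω)

/-! ### Square roots and random signs -/

lemma sqrt_add_sum_le {ι : Type*} (s : Finset ι) {A : ℝ} (hA : 0 ≤ A) {X Y Z : ι → ℝ}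
    (hZ : ∀ e ∈ s, 0 ≤ Z e) (hX : ∀ e ∈ s, X e ≤ (Y e + Z e) ^ 2) :
    √(A + ∑ e ∈ s, X e) ≤ √(A + ∑ e ∈ s, Y e ^ 2) + ∑ e ∈ s, Z e := by
  set N := √(A + ∑ e ∈ s, Y e ^ 2)
  have hN2 : N ^ 2 = A + ∑ e ∈ s, Y e ^ 2 := Real.sq_sqrt (by positivity)
  have hYN : ∀ e ∈ s, Y e ≤ N := fun e he ↦ Real.le_sqrt_of_sq_le <|
    (single_le_sum (f := fun e ↦ Y e ^ 2) (fun e _ ↦ sq_nonneg _) he).trans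
      (le_add_of_nonneg_left hA)
  refine Real.sqrt_le_iff.2 ⟨by have := sum_nonneg hZ; positivity, ?_⟩
  calc A + ∑ e ∈ s, X e
      ≤ A + ∑ e ∈ s, (Y e ^ 2 + 2 * N * Z e + Z e ^ 2) := by
        gcongr with e he
        nlinarith [hX e he, mul_le_mul_of_nonneg_right (hYN e he) (hZ e he)]
    _ = N ^ 2 + 2 * N * ∑ e ∈ s, Z e + ∑ e ∈ s, Z e ^ 2 := by
        rw [hN2, sum_add_distrib, sum_add_distrib, mul_sum]; ring
    _ ≤ (N + ∑ e ∈ s, Z e) ^ 2 := by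
        linarith [sum_sq_le_sq_sum_of_nonneg hZ,
          add_sq N (∑ e ∈ s, Z e)]

lemma sum_intUnits {M : Type*} [AddCommMonoid M] (f : ℤˣ → M) : ∑ σ, f σ = f 1 + f (-1) := by
  rw [UnitsInt.univ, sum_pair (by decide)]

lemma sum_signs_norm_add_sum_sq {ι E : Type*} [Fintype ι] [DecidableEq ι] [NormedAddCommGroup E]
    [InnerProductSpace ℝ E] (s : Finset ι) (p : E) (x : ι → E) :
    ∑ ε : ι → ℤˣ, ‖p + ∑ e ∈ s, ε e • x e‖ ^ 2 =
      Fintype.card (ι → ℤˣ) * (‖p‖ ^ 2 + ∑ e ∈ s, ‖x e‖ ^ 2) := by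
  induction s using Finset.induction_on with
  | empty => simp
  | insert a s ha ih =>
    let flip : (ι → ℤˣ) ≃ (ι → ℤˣ) := Equiv.mulLeft (Pi.mulSingle a (-1))
    let u (ε : ι → ℤˣ) : E := p + ∑ e ∈ s, ε e • x e
    have hflip_self (ε) : flip ε a = -ε a := by simp [flip]
    have hflip_u (ε) : u (flip ε) = u ε := by
      refine congrArg (p + ·) (sum_congr rfl fun e he ↦ ?_)
      have hea : e ≠ a := fun h ↦ ha (h ▸ he)
      simp [flip, hea]
    have hpar (ε) : ‖u ε + ε a • x a‖ ^ 2 + ‖u (flip ε) + flip ε a • x a‖ ^ 2 =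
        2 * (‖u ε‖ ^ 2 + ‖x a‖ ^ 2) := by
      rw [hflip_self, hflip_u, Units.neg_smul, ← sub_eq_add_neg, parallelogram_law_with_norm ℝ]
      rcases Int.units_eq_one_or (ε a) with h | h <;> simp [h, Units.neg_smul]
    have hsum : ∑ ε, ‖u ε + ε a • x a‖ ^ 2 = ∑ ε, (‖u ε‖ ^ 2 + ‖x a‖ ^ 2) := by
      have h := Equiv.sum_comp flip fun ε ↦ ‖u ε + ε a • x a‖ ^ 2
      have h' := sum_congr rfl fun ε (_ : ε ∈ univ) ↦ hpar ε
      rw [sum_add_distrib, h, ← mul_sum] at h'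
      linarith
    have hsplit (ε : ι → ℤˣ) : p + ∑ e ∈ insert a s, ε e • x e = u ε + ε a • x a := by
      rw [sum_insert ha]; simp only [u]; abel
    simp only [hsplit]
    rw [hsum, sum_add_distrib, ih, sum_insert ha, sum_const, card_univ, nsmul_eq_mul]
    ring

lemma sum_signs_sqrt_le {ι : Type*} [Fintype ι] [DecidableEq ι] {R : ℝ} (hR : 0 ≤ R) (p : ℝ)
    (x : ι → ℝ) :
    ∑ ε : ι → ℤˣ, √((p + ∑ e, ε e • x e) ^ 2 + R) ≤
      Fintype.card (ι → ℤˣ) * √(p ^ 2 + ∑ e, x e ^ 2 + R) := by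
  have hsq := sum_signs_norm_add_sum_sq univ p x
  simp only [Real.norm_eq_abs, sq_abs] at hsq
  refine abs_le_of_sq_le_sq' ?_ (by positivity) |>.2
  calc (∑ ε : ι → ℤˣ, √((p + ∑ e, ε e • x e) ^ 2 + R)) ^ 2
      ≤ Fintype.card (ι → ℤˣ) * ∑ ε : ι → ℤˣ, √((p + ∑ e, ε e • x e) ^ 2 + R) ^ 2 :=
        sq_sum_le_card_mul_sum_sq
    _ = (Fintype.card (ι → ℤˣ) * √(p ^ 2 + ∑ e, x e ^ 2 + R)) ^ 2 := by
        simp only [Real.sq_sqrt (add_nonneg (sq_nonneg _) hR), sum_add_distrib, hsq, sum_const,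
          card_univ, nsmul_eq_mul]
        rw [mul_pow, Real.sq_sqrt (by positivity)]
        ring

lemma sq_add_sq_div_two_le {g α β : ℝ} (hg : 0 ≤ g) (hα : 0 ≤ α) (hβ : 0 ≤ β) :
    ((g + α) ^ 2 + (g + β) ^ 2) / 2 ≤ (g + (1 + √2 / 2) * ((α + β) / 2)) ^ 2 := by
  have h2 : √2 ^ 2 = 2 := Real.sq_sqrt zero_le_two
  nlinarith [mul_nonneg hg (add_nonneg hα hβ), mul_nonneg hα hβ, Real.sqrt_nonneg 2,
    mul_nonneg (Real.sqrt_nonneg 2) (mul_nonneg hg (add_nonneg hα hβ)),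
    mul_nonneg (Real.sqrt_nonneg 2) (sq_nonneg (α + β)), sq_nonneg (α - β)]

lemma sq_add_sq_le_sqrt_two {g α τ : ℝ} (hg : 0 ≤ g) (hα : 0 ≤ α) (hατ : α ≤ 2 * τ) :
    (g + τ) ^ 2 + (g + α) ^ 2 ≤ (√2 * g + (τ + √2 / 2 * α)) ^ 2 := by
  have h2 : √2 ^ 2 = 2 := Real.sq_sqrt zero_le_two
  have h1 : 0 ≤ √2 - 1 := sub_nonneg.2 (Real.one_le_sqrt.2 one_le_two)
  have hτ : 0 ≤ τ := by linarith
  have hsq : (√2 * g + (τ + √2 / 2 * α)) ^ 2 =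
      √2 ^ 2 * (g ^ 2 + g * α + α ^ 2 / 4) + 2 * √2 * (g * τ) + √2 * (τ * α) + τ ^ 2 := by ring
  rw [hsq, h2]
  nlinarith [mul_nonneg h1 (mul_nonneg hg hτ), mul_nonneg h1 (mul_nonneg hτ hα),
    mul_nonneg hα (sub_nonneg.2 hατ)]

lemma sqrt_sq_two_mul (x : ℝ) : √(2 ^ 2 * x) = 2 * √x := by
  rw [Real.sqrt_mul (sq_nonneg 2), Real.sqrt_sq zero_le_two]

/-! ### Replacing edges by diamonds -/

namespace WGraph

section SlashDiamond

variable (G : WGraph)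

/-- A vertex of `G`, seen in `G ⊘ D`. -/
def oldVertex (v : G.V) : (G.slash diamond).V := Sum.inl v

/-- The vertex of `G ⊘ D` in the middle of one of the two sides of the copy of `D` that replaces
the edge `e`. The sides are indexed by signs. -/
def midpt (e : G.ι) (σ : ℤˣ) : (G.slash diamond).V :=
  Sum.inr (e, if σ = 1 then ⟨(2 : Fin 4), by unfold diamond; decide⟩
    else ⟨(3 : Fin 4), by unfold diamond; decide⟩)

/-- The edge of `G ⊘ D` from the initial vertex of `e` to `midpt e σ`. -/
def firstHalf (e : G.ι) (σ : ℤˣ) : (G.slash diamond).ι :=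
  (e, if σ = 1 then (0 : Fin 4) else (2 : Fin 4))

/-- The edge of `G ⊘ D` from `midpt e σ` to the terminal vertex of `e`. -/
def secondHalf (e : G.ι) (σ : ℤˣ) : (G.slash diamond).ι :=
  (e, if σ = 1 then (1 : Fin 4) else (3 : Fin 4))

/-- The edge of `G` whose copy of `D` contains the edge `i` of `G ⊘ D`. -/
def parent (i : (G.slash diamond).ι) : G.ι := Prod.fst i

/-- The side of the copy of `D` on which the edge `i` of `G ⊘ D` lies. -/
def side (i : (G.slash diamond).ι) : ℤˣ :=
  (![1, 1, -1, -1] : Fin 4 → ℤˣ) (Prod.snd i)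

/-- The function on the vertices of `G ⊘ D` with values `f` at the vertices of `G` and `m e σ` at
`midpt e σ`. -/
def slashExtend {M : Type*} (f : G.V → M) (m : G.ι → ℤˣ → M) : (G.slash diamond).V → M :=
  Sum.elim f fun q ↦ m q.1 ((![1, 1, 1, -1] : Fin 4 → ℤˣ) q.2.1)

variable {G} (e : G.ι) (σ : ℤˣ)

@[simp] lemma src_firstHalf : (G.slash diamond).src (G.firstHalf e σ) = G.oldVertex (G.src e) := by
  rcases Int.units_eq_one_or σ with rfl | rfl <;> rfl

@[simp] lemma dst_firstHalf : (G.slash diamond).dst (G.firstHalf e σ) = G.midpt e σ := by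
  rcases Int.units_eq_one_or σ with rfl | rfl <;> rfl

@[simp] lemma src_secondHalf : (G.slash diamond).src (G.secondHalf e σ) = G.midpt e σ := by
  rcases Int.units_eq_one_or σ with rfl | rfl <;> rfl

@[simp] lemma dst_secondHalf :
    (G.slash diamond).dst (G.secondHalf e σ) = G.oldVertex (G.dst e) := by
  rcases Int.units_eq_one_or σ with rfl | rfl <;> rfl

lemma len_slash_diamond (i : (G.slash diamond).ι) :
    (G.slash diamond).len i = G.len (G.parent i) / 2 :=
  mul_one_div _ _

@[simp] lemma parent_firstHalf : G.parent (G.firstHalf e σ) = e := rfl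

@[simp] lemma parent_secondHalf : G.parent (G.secondHalf e σ) = e := rfl

@[simp] lemma side_firstHalf : G.side (G.firstHalf e σ) = σ := by
  rcases Int.units_eq_one_or σ with rfl | rfl <;> rfl

@[simp] lemma side_secondHalf : G.side (G.secondHalf e σ) = σ := by
  rcases Int.units_eq_one_or σ with rfl | rfl <;> rfl

variable {M : Type*} (f : G.V → M) (m : G.ι → ℤˣ → M)

@[simp] lemma slashExtend_oldVertex (v : G.V) : G.slashExtend f m (G.oldVertex v) = f v := rfl

@[simp] lemma slashExtend_midpt : G.slashExtend f m (G.midpt e σ) = m e σ := by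
  rcases Int.units_eq_one_or σ with rfl | rfl <;> rfl

lemma forall_edge_slash_diamond {P : (G.slash diamond).ι → Prop} :
    (∀ i, P i) ↔ ∀ e σ, P (G.firstHalf e σ) ∧ P (G.secondHalf e σ) := by
  refine ⟨fun h e σ ↦ ⟨h _, h _⟩, fun h ⟨e, i⟩ ↦ ?_⟩
  fin_cases i
  exacts [(h e 1).1, (h e 1).2, (h e (-1)).1, (h e (-1)).2]

lemma forall_vertex_slash_diamond {P : (G.slash diamond).V → Prop} :
    (∀ v, P v) ↔ (∀ v, P (G.oldVertex v)) ∧ ∀ e σ, P (G.midpt e σ) := by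
  refine ⟨fun h ↦ ⟨fun v ↦ h _, fun e σ ↦ h _⟩, fun ⟨hold, hmid⟩ v ↦ ?_⟩
  rcases v with v | ⟨e, ⟨i, hi⟩⟩
  · exact hold v
  · change Fin 4 at i
    fin_cases i
    exacts [absurd rfl hi.1, absurd rfl hi.2, hmid e 1, hmid e (-1)]

lemma sum_edge_slash_diamond [AddCommMonoid M] (f : (G.slash diamond).ι → M) :
    ∑ i, f i = ∑ e, ∑ σ, (f (G.firstHalf e σ) + f (G.secondHalf e σ)) := by
  simp only [sum_intUnits]
  refine (Fintype.sum_prod_type f).trans (sum_congr rfl fun e _ ↦ ?_)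
  refine (Fin.sum_univ_four fun i ↦ f (e, i)).trans ?_
  rw [add_assoc]
  rfl

lemma sum_vertex_slash_diamond [AddCommMonoid M] (f : (G.slash diamond).V → M) :
    ∑ v, f v = ∑ v, f (G.oldVertex v) + ∑ e, ∑ σ, f (G.midpt e σ) := by
  have hbij : Function.Bijective (Sum.elim G.oldVertex fun q : G.ι × ℤˣ ↦ G.midpt q.1 q.2) := by
    have hinv : Function.LeftInverse (G.slashExtend Sum.inl fun e σ ↦ Sum.inr (e, σ))
        (Sum.elim G.oldVertex fun q : G.ι × ℤˣ ↦ G.midpt q.1 q.2) := by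
      rintro (v | ⟨e, σ⟩) <;> simp
    exact ⟨hinv.injective, forall_vertex_slash_diamond.2
      ⟨fun v ↦ ⟨Sum.inl v, rfl⟩, fun e σ ↦ ⟨Sum.inr (e, σ), rfl⟩⟩⟩
  rw [← Fintype.sum_bijective _ hbij _ f fun _ ↦ rfl, Fintype.sum_sum_type, Fintype.sum_prod_type]
  rfl

lemma sum_slashExtend_two_mul (φ : G.V → ℤ) (m : G.ι → ℤˣ → ℤ)
    (F : (G.slash diamond).V → ℝ) :
    ∑ v, G.slashExtend (fun v ↦ 2 * φ v) m v * F v =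
      2 * (∑ v, φ v * F (G.oldVertex v)) + ∑ e, ∑ σ, m e σ * F (G.midpt e σ) := by
  simp [sum_vertex_slash_diamond, mul_sum, mul_assoc]

end SlashDiamond

/-- The sum of the edge lengths of `G`. -/
def totalLength (G : WGraph) : ℝ := ∑ e, G.len e

lemma totalLength_slash_diamond (G : WGraph) :
    (G.slash diamond).totalLength = 2 * G.totalLength := by
  simp [totalLength, sum_edge_slash_diamond, len_slash_diamond, mul_sum, two_mul]

/-- The drop of the function `F` along the edge `e`. -/
def drop {G : WGraph} (F : G.V → ℝ) (e : G.ι) : ℝ := F (G.src e) - F (G.dst e)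

section Detour

variable {G : WGraph} (F : (G.slash diamond).V → ℝ) (e : G.ι) (σ : ℤˣ)

/-- The excess of the variation of `F` along the side `σ` of the copy of the diamond over `e`
over its variation between the ends of `e`. -/
noncomputable def detour : ℝ := |drop F (G.firstHalf e σ)| + |drop F (G.secondHalf e σ)| -
  |drop (F ∘ G.oldVertex) e|

lemma drop_add_drop_halves :
    drop F (G.firstHalf e σ) + drop F (G.secondHalf e σ) = drop (F ∘ G.oldVertex) e := by
  simp [drop]

lemma detour_nonneg : 0 ≤ detour F e σ := by
  rw [detour, ← drop_add_drop_halves F e σ, sub_nonneg]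
  exact abs_add_le _ _

lemma drop_sq_add_drop_sq_le :
    drop F (G.firstHalf e σ) ^ 2 + drop F (G.secondHalf e σ) ^ 2 ≤
      (|drop (F ∘ G.oldVertex) e| + detour F e σ) ^ 2 := by
  rw [detour, add_sub_cancel, ← sq_abs (drop F (G.firstHalf e σ)),
    ← sq_abs (drop F (G.secondHalf e σ))]
  exact pow_add_pow_le (abs_nonneg _) (abs_nonneg _) two_ne_zero

lemma abs_midpt_sub_midpt_le :
    |F (G.midpt e 1) - F (G.midpt e (-1))| ≤
      |drop (F ∘ G.oldVertex) e| + (∑ σ, detour F e σ) / 2 := by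
  have hsrc := abs_sub (drop F (G.firstHalf e (-1))) (drop F (G.firstHalf e 1))
  have hdst := abs_sub (drop F (G.secondHalf e 1)) (drop F (G.secondHalf e (-1)))
  simp only [drop, src_firstHalf, dst_firstHalf, src_secondHalf, dst_secondHalf,
    sub_sub_sub_cancel_left, sub_sub_sub_cancel_right, sum_intUnits, detour] at hsrc hdst ⊢
  linarith

lemma sum_abs_drop_slash_diamond :
    ∑ i, |drop F i| = 2 * ∑ e, (|drop (F ∘ G.oldVertex) e| + (∑ σ, detour F e σ) / 2) := by
  rw [sum_edge_slash_diamond, mul_sum]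
  refine sum_congr rfl fun e _ ↦ ?_
  simp only [sum_intUnits, detour]
  ring

end Detour

/-! ### The shortest-path metric -/

variable {G : WGraph}

variable (G) in
/-- Any two vertices of `G` are joined by a walk. -/
def Connected : Prop := ∀ x y, ∃ l, G.IsWalk x y l

lemma connected_iff_forall_invariant : G.Connected ↔
    ∀ P : G.V → Prop, (∀ e, P (G.src e) ↔ P (G.dst e)) → ∀ x y, P x ↔ P y := by
  refine ⟨fun hG P hP x y ↦ ?_, fun hG x y ↦ ?_⟩
  · obtain ⟨l, hl⟩ := hG x y
    induction l generalizing x with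
    | nil => rw [show x = y from hl]
    | cons p l ih =>
      obtain ⟨rfl, hl⟩ := hl
      refine Iff.trans ?_ (ih _ hl)
      rcases p with ⟨e, _ | _⟩
      exacts [(hP e).symm, hP e]
  · refine (hG (fun z ↦ ∃ l, G.IsWalk z y l) (fun e ↦ ?_) x y).2 ⟨[], rfl⟩
    exact ⟨fun ⟨l, hl⟩ ↦ ⟨(e, false) :: l, rfl, hl⟩, fun ⟨l, hl⟩ ↦ ⟨(e, true) :: l, rfl, hl⟩⟩

lemma Connected.slash_diamond (hG : G.Connected) : (G.slash diamond).Connected := by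
  rw [connected_iff_forall_invariant] at hG ⊢
  intro P hP
  have hmid (e σ) : P (G.midpt e σ) ↔ P (G.oldVertex (G.src e)) := by
    simpa using (hP (G.firstHalf e σ)).symm
  have hold := hG (P ∘ G.oldVertex) fun e ↦ by
    simpa using (hP (G.firstHalf e 1)).trans (by simpa using hP (G.secondHalf e 1))
  have hG' : ∀ x, P x ↔ P (G.oldVertex G.s) :=
    forall_vertex_slash_diamond.2 ⟨fun v ↦ hold v _, fun e σ ↦ (hmid e σ).trans (hold _ _)⟩
  exact fun x y ↦ (hG' x).trans (hG' y).symm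

lemma connected_slashPow_diamond (n : ℕ) : (diamond.slashPow n).Connected := by
  induction n with
  | zero =>
    refine connected_iff_forall_invariant.2 fun P hP ↦ ?_
    have h : P false ↔ P true := hP ()
    rintro (_ | _) (_ | _)
    exacts [Iff.rfl, h, h.symm, Iff.rfl]
  | succ n ih => exact ih.slash_diamond

lemma len_slashPow_diamond (n : ℕ) (e : (diamond.slashPow n).ι) :
    (diamond.slashPow n).len e = (1 / 2) ^ n := by
  induction n with
  | zero => rfl
  | succ n ih => exact (congrArg (· * (1 / 2 : ℝ)) (ih e.1)).trans (pow_succ _ _).symm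

lemma totalLength_slashPow_diamond (n : ℕ) : (diamond.slashPow n).totalLength = 2 ^ n := by
  induction n with
  | zero => exact (Fintype.sum_unique (ι := Unit) _).trans (pow_zero _).symm
  | succ n ih => rw [pow_succ', ← ih]; exact totalLength_slash_diamond _

lemma sub_le_sum_len {F : G.V → ℝ} (hF : ∀ e, |drop F e| ≤ G.len e) {x y : G.V}
    {l : List (G.ι × Bool)} (hl : G.IsWalk x y l) : F x - F y ≤ (l.map fun p ↦ G.len p.1).sum := by
  induction l generalizing x with
  | nil => rw [show x = y from hl, sub_self, List.map_nil, List.sum_nil]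
  | cons p l ih =>
    obtain ⟨rfl, hl⟩ := hl
    have hstep : F (G.stepSrc p) - F (G.stepDst p) ≤ G.len p.1 := by
      rcases p with ⟨e, _ | _⟩
      · exact (neg_sub _ _).symm.trans_le (neg_le.1 (abs_le.1 (hF e)).1)
      · exact (abs_le.1 (hF e)).2
    rw [List.map_cons, List.sum_cons]
    linarith [ih hl]

lemma Connected.sub_le_gdist (hG : G.Connected) {F : G.V → ℝ} (hF : ∀ e, |drop F e| ≤ G.len e)
    (x y : G.V) : F x - F y ≤ G.gdist x y := by
  obtain ⟨l, hl⟩ := hG x y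
  refine le_csInf ⟨_, l, hl, rfl⟩ ?_
  rintro _ ⟨l, hl, rfl⟩
  exact sub_le_sum_len hF hl

lemma Connected.le_gdist_of_ne (hG : G.Connected) {r : ℝ} (hr : 0 ≤ r) (hlen : ∀ e, r ≤ G.len e)
    {x y : G.V} (hxy : x ≠ y) : r ≤ G.gdist x y := by
  have hdrop (e) : |drop (Pi.single x r) e| ≤ r := by
    simp only [drop, Pi.single_apply]
    split_ifs <;> simp [abs_of_nonneg hr, hr]
  simpa [hxy.symm] using hG.sub_le_gdist (fun e ↦ (hdrop e).trans (hlen e)) x y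

lemma sum_len_nonneg (hlen : ∀ e, 0 ≤ G.len e) (l : List (G.ι × Bool)) :
    0 ≤ (l.map fun p ↦ G.len p.1).sum :=
  List.sum_nonneg <| by simpa using fun e _ ↦ hlen e

lemma gdist_nonneg (hlen : ∀ e, 0 ≤ G.len e) (x y : G.V) : 0 ≤ G.gdist x y := by
  refine Real.sInf_nonneg ?_
  rintro _ ⟨l, -, rfl⟩
  exact sum_len_nonneg hlen l

lemma gdist_src_dst_le (hlen : ∀ e, 0 ≤ G.len e) (e : G.ι) :
    G.gdist (G.src e) (G.dst e) ≤ G.len e := by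
  refine csInf_le ⟨0, ?_⟩ ⟨[(e, true)], ⟨rfl, rfl⟩, by simp⟩
  rintro _ ⟨l, -, rfl⟩
  exact sum_len_nonneg hlen l

end WGraph

open WGraph

/-! ### Transportation cost -/

section TransportationCost

variable {V : Type*} [DecidableEq V] {d : V → V → ℝ} {μ : V → ℝ}

/-- The costs of the transportation plans representing `μ`; `TCnorm d μ` is their infimum. -/
def transportCosts (d : V → V → ℝ) (μ : V → ℝ) : Set ℝ :=
  {c : ℝ | ∃ (n : ℕ) (a : Fin n → ℝ) (x y : Fin n → V), (∀ i, 0 ≤ a i) ∧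
    (∀ z : V, μ z = ∑ i, a i * ((if x i = z then (1 : ℝ) else 0) -
      (if y i = z then (1 : ℝ) else 0))) ∧
    c = ∑ i, a i * d (x i) (y i)}

lemma nonneg_of_mem_transportCosts (hd : ∀ x y, 0 ≤ d x y) {c : ℝ} (hc : c ∈ transportCosts d μ) :
    0 ≤ c := by
  obtain ⟨n, a, x, y, ha, -, rfl⟩ := hc
  exact sum_nonneg fun i _ ↦ mul_nonneg (ha i) (hd _ _)

lemma sum_mem_transportCosts {I : Type*} [Fintype I] {a : I → ℝ} (x y : I → V) (ha : ∀ i, 0 ≤ a i)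
    (hμ : μ = ∑ i, a i • (Pi.single (x i) 1 - Pi.single (y i) 1)) :
    ∑ i, a i * d (x i) (y i) ∈ transportCosts d μ := by
  let E := (Fintype.equivFin I).symm
  refine ⟨Fintype.card I, a ∘ E, x ∘ E, y ∘ E, fun i ↦ ha _, fun z ↦ ?_,
    (E.sum_comp fun i ↦ a i * d (x i) (y i)).symm⟩
  refine Eq.trans ?_ (E.sum_comp fun i ↦
    a i * ((if x i = z then 1 else 0) - (if y i = z then 1 else 0))).symm
  simp [hμ, Pi.single_apply, eq_comm]

variable [Fintype V]

-- The positive part of `μ` is shipped to `s`, and from there to the negative part.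
lemma sum_star_mem_transportCosts (d : V → V → ℝ) (s : V) (hμ : ∑ v, μ v = 0) :
    ∑ v, (μ v)⁺ * d v s + ∑ v, (μ v)⁻ * d s v ∈ transportCosts d μ := by
  have hnonneg : ∀ i : V ⊕ V, 0 ≤ Sum.elim (fun v ↦ (μ v)⁺) (fun v ↦ (μ v)⁻) i := by
    rintro (v | v)
    exacts [posPart_nonneg _, negPart_nonneg _]
  have hstar (v) : (μ v)⁺ • (Pi.single v 1 - Pi.single s 1 : V → ℝ) +
      (μ v)⁻ • (Pi.single s 1 - Pi.single v 1) = Pi.single v (μ v) - μ v • Pi.single s 1 := by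
    have hsingle : Pi.single v (μ v) = μ v • (Pi.single v 1 : V → ℝ) := by
      rw [← Pi.single_smul', smul_eq_mul, mul_one]
    rw [hsingle]
    linear_combination (norm := module)
      (posPart_sub_negPart (μ v)) • (Pi.single v 1 - Pi.single s 1 : V → ℝ)
  have hplan : μ = ∑ i : V ⊕ V, Sum.elim (fun v ↦ (μ v)⁺) (fun v ↦ (μ v)⁻) i •
      (Pi.single (Sum.elim (fun v ↦ v) (fun _ ↦ s) i) 1 -
        Pi.single (Sum.elim (fun _ ↦ s) (fun v ↦ v) i) 1) := by
    rw [Fintype.sum_sum_type, ← sum_add_distrib]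
    refine Eq.symm ((sum_congr rfl fun v _ ↦ hstar v).trans ?_)
    rw [sum_sub_distrib, univ_sum_single, ← sum_smul, hμ, zero_smul, sub_zero]
  have hmem := sum_mem_transportCosts (d := d) _ _ hnonneg hplan
  rwa [Fintype.sum_sum_type] at hmem

lemma TCnorm_le_of_mem_transportCosts (hd : ∀ x y, 0 ≤ d x y) {c : ℝ}
    (hc : c ∈ transportCosts d μ) : TCnorm d μ ≤ c :=
  csInf_le ⟨0, fun _ ↦ nonneg_of_mem_transportCosts hd⟩ hc

lemma TCnorm_single_sub_single_le (hd : ∀ x y, 0 ≤ d x y) (u v : V) :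
    TCnorm d (Pi.single u 1 - Pi.single v 1) ≤ d u v := by
  simpa using TCnorm_le_of_mem_transportCosts hd <|
    sum_mem_transportCosts (I := Unit) (a := fun _ ↦ 1) (fun _ ↦ u) (fun _ ↦ v)
      (by simp) (by simp)

lemma sum_mul_le_TCnorm (s : V) {F : V → ℝ} (hF : ∀ x y, F x - F y ≤ d x y)
    (hμ : ∑ v, μ v = 0) : ∑ v, μ v * F v ≤ TCnorm d μ := by
  refine le_csInf ⟨_, sum_star_mem_transportCosts d s hμ⟩ ?_
  rintro _ ⟨n, a, x, y, ha, h, rfl⟩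
  calc ∑ v, μ v * F v = ∑ i, a i * (F (x i) - F (y i)) := by
        simp only [h, sum_mul]
        rw [sum_comm]
        refine sum_congr rfl fun i _ ↦ ?_
        simp [mul_assoc, sub_mul, ← mul_sum, sum_sub_distrib]
    _ ≤ _ := sum_le_sum fun i _ ↦ mul_le_mul_of_nonneg_left (hF _ _) (ha i)

lemma TCnorm_le_mul_sum_abs (hd : ∀ x y, 0 ≤ d x y) (s : V) (hμ : ∑ v, μ v = 0) :
    TCnorm d μ ≤ (∑ v, (d v s + d s v)) * ∑ v, |μ v| := by
  refine (TCnorm_le_of_mem_transportCosts hd (sum_star_mem_transportCosts d s hμ)).trans ?_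
  rw [← sum_add_distrib, mul_sum]
  refine sum_le_sum fun v _ ↦ ?_
  have hsum : d v s + d s v ≤ ∑ v, (d v s + d s v) :=
    single_le_sum (f := fun v ↦ d v s + d s v) (fun v _ ↦ add_nonneg (hd _ _) (hd _ _))
      (mem_univ v)
  have hpos : (μ v)⁺ ≤ |μ v| := sup_le (le_abs_self _) (abs_nonneg _)
  have hneg : (μ v)⁻ ≤ |μ v| := sup_le (neg_le_abs _) (abs_nonneg _)
  calc (μ v)⁺ * d v s + (μ v)⁻ * d s v ≤ |μ v| * d v s + |μ v| * d s v := by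
        gcongr <;> exact hd _ _
    _ ≤ _ := by
        rw [← mul_add, mul_comm]
        gcongr

lemma half_mul_sum_abs_le_TCnorm (hd : ∀ x y, 0 ≤ d x y) {r : ℝ} (hr : 0 ≤ r)
    (hrd : Pairwise fun x y ↦ r ≤ d x y) (s : V) (hμ : ∑ v, μ v = 0) :
    r / 2 * ∑ v, |μ v| ≤ TCnorm d μ := by
  have hsign (x y : ℝ) : (SignType.sign x : ℝ) - SignType.sign y ≤ 2 := by
    cases SignType.sign x <;> cases SignType.sign y <;> norm_num [SignType.cast]
  have hF (x y) : r / 2 * SignType.sign (μ x) - r / 2 * SignType.sign (μ y) ≤ d x y := by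
    rcases eq_or_ne x y with rfl | hxy
    · simpa using hd x x
    · refine le_trans ?_ (hrd hxy)
      rw [← mul_sub]
      nlinarith [hsign (μ x) (μ y)]
  refine le_of_eq_of_le ?_ (sum_mul_le_TCnorm s hF hμ)
  simp only [mul_sum, mul_left_comm (μ _), self_mul_sign]

end TransportationCost

lemma exists_dist_Lp_count_eq {V : Type} [Fintype V] [MeasurableSpace V]
    [DiscreteMeasurableSpace V] : ∃ ι : (V → ℝ) → Lp ℝ 1 (Measure.count : Measure V),
      ∀ g h, dist (ι g) (ι h) = ∑ v, |g v - h v| := by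
  have hmem (g : V → ℝ) : MemLp g 1 (Measure.count : Measure V) := MemLp.of_discrete
  refine ⟨fun g ↦ (hmem g).toLp, fun g h ↦ ?_⟩
  rw [dist_eq_norm, ← MemLp.toLp_sub, L1.norm_eq_integral_norm]
  refine (integral_congr_ae ((MemLp.coeFn_toLp _).fun_comp fun z ↦ ‖z‖)).trans ?_
  rw [integral_count]
  rfl

lemma le_c1TC {V : Type} [Fintype V] [DecidableEq V] {d : V → V → ℝ} (hd : ∀ x y, 0 ≤ d x y)
    {r : ℝ} (hr : 0 < r) (hrd : Pairwise fun x y ↦ r ≤ d x y) (s : V) {c : ℝ}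
    (hc : ∀ D : ℝ, 1 ≤ D → ∀ (Ω : Type) (_ : MeasurableSpace Ω) (ν : Measure Ω)
      (f : {μ : V → ℝ // ∑ x, μ x = 0} → Lp ℝ 1 ν),
      (∀ μ μ', TCnorm d (fun x ↦ μ.1 x - μ'.1 x) ≤ dist (f μ) (f μ') ∧
        dist (f μ) (f μ') ≤ D * TCnorm d (fun x ↦ μ.1 x - μ'.1 x)) → c ≤ D) :
    c ≤ c1TC d := by
  refine le_csInf ?_ ?_
  · let _ : MeasurableSpace V := ⊤
    have : DiscreteMeasurableSpace V := ⟨fun _ ↦ trivial⟩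
    obtain ⟨ι, hι⟩ := exists_dist_Lp_count_eq (V := V)
    let K := ∑ v, (d v s + d s v)
    have hK : 0 ≤ K := sum_nonneg fun v _ ↦ add_nonneg (hd _ _) (hd _ _)
    refine ⟨max 1 (2 * K / r), le_max_left _ _, V, ⊤, Measure.count, fun μ ↦ ι (K • μ.1),
      fun μ μ' ↦ ?_⟩
    have hsum : ∑ v, (μ.1 v - μ'.1 v) = 0 := by rw [sum_sub_distrib, μ.2, μ'.2, sub_zero]
    simp only [hι, Pi.smul_apply, smul_eq_mul, ← mul_sub, abs_mul, abs_of_nonneg hK, ← mul_sum]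
    refine ⟨TCnorm_le_mul_sum_abs hd s hsum, ?_⟩
    calc K * ∑ v, |μ.1 v - μ'.1 v| = 2 * K / r * (r / 2 * ∑ v, |μ.1 v - μ'.1 v|) := by
          field_simp
      _ ≤ _ := by
          gcongr
          · exact le_max_right _ _
          · exact half_mul_sum_abs_le_TCnorm hd hr.le hrd s hsum
  · rintro D ⟨hD, Ω, hΩ, ν, f, hf⟩
    exact hc D hD Ω hΩ ν f hf

section Recenter

variable {V : Type*} [Fintype V] [DecidableEq V]

/-- The integer charge `k`, made into an element of `TC(V)` by moving its total mass away from the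
vertex `s`. -/
def recenter (s : V) (k : V → ℤ) : {μ : V → ℝ // ∑ x, μ x = 0} :=
  ⟨fun v ↦ k v - (Pi.single s (∑ x, k x) : V → ℤ) v, by
    rw [sum_sub_distrib]; norm_cast; simp⟩

lemma recenter_coe_of_sum_eq_zero (s : V) {k : V → ℤ} (hk : ∑ x, k x = 0) :
    (recenter s k).1 = fun v ↦ (k v : ℝ) := by
  simp [recenter, hk]

lemma recenter_add_sub (s : V) (k l : V → ℤ) :
    (fun v ↦ (recenter s (k + l)).1 v - (recenter s k).1 v) = (recenter s l).1 := by
  funext v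
  simp only [recenter, Pi.add_apply, sum_add_distrib, Pi.single_add]
  push_cast
  ring

end Recenter

/-! ### Test families -/

/-- A finite family, uniformly distributed over `Ω`, of nonnegative integer edge weights and
integer charges of total mass zero on the vertices of `G`, which satisfies an `L₁` inequality
in terms of the edges of `G`, while every charge has transportation cost norm at least
`h * G.totalLength`. The parameter `κ` says how strongly the inequality controls the weights,
which carry the potential for increasing `h` in `G ⊘ D`: a dual function that certifies `h` does
not vary along edges of positive weight, so that it can be modified in the copies of `D` over
them. -/
structure TestFamily (G : WGraph) (κ h : ℝ) where
  Ω : Type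
  [fintype : Fintype Ω]
  [nonempty : Nonempty Ω]
  weight : Ω → G.ι → ℕ
  charge : Ω → G.V → ℤ
  sum_charge : ∀ ω, ∑ v, charge ω v = 0
  sum_weight : ∀ e, ∑ ω, weight ω e = Fintype.card Ω
  sum_weight_mul_len : ∀ ω, ∑ e, weight ω e * G.len e = G.totalLength
  sum_sqrt_le : ∀ F : G.V → ℝ,
    ∑ ω, √((∑ v, charge ω v * F v) ^ 2 + κ * ∑ e, (weight ω e * drop F e) ^ 2) ≤
      (1 + √2 / 2) * (Fintype.card Ω * ∑ e, |drop F e|)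
  exists_dual : ∀ ω, ∃ F : G.V → ℝ, (∀ e, |drop F e| ≤ G.len e) ∧
    (∀ e, weight ω e ≠ 0 → F (G.src e) = F (G.dst e)) ∧
    ∑ v, charge ω v * F v = h * G.totalLength

namespace TestFamily

attribute [instance] fintype nonempty

/-- The family with zero charge and weight one on the single-edge graph. -/
def edgeGraph : TestFamily edgeGraph 2 0 where
  Ω := Unit
  weight _ _ := 1
  charge _ _ := 0
  sum_charge _ := by simp
  sum_weight _ := rfl
  sum_weight_mul_len _ := by simp [totalLength]
  sum_sqrt_le F := by
    have h2 : √2 ≤ 1 + √2 / 2 := by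
      linarith [Real.sqrt_le_iff.2 (⟨zero_le_two, by norm_num⟩ : (0 : ℝ) ≤ 2 ∧ (2 : ℝ) ≤ 2 ^ 2)]
    have hdrop : √(2 * drop F () ^ 2) ≤ (1 + √2 / 2) * |drop F ()| := by
      rw [Real.sqrt_mul zero_le_two, Real.sqrt_sq_eq_abs]
      gcongr
    have hι (f : WGraph.edgeGraph.ι → ℝ) : ∑ e, f e = f () :=
      Fintype.sum_unique (ι := Unit) f
    simpa [hι] using hdrop
  exists_dual _ := ⟨0, fun e ↦ by simp [drop, WGraph.edgeGraph], by simp⟩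

variable {G : WGraph} {κ h : ℝ}

lemma sum_sqrt_add_sum_le (T : TestFamily G κ h) (hκ : 0 ≤ κ) (F : G.V → ℝ) {X Z : G.ι → ℝ}
    (hZ : ∀ e, 0 ≤ Z e) (hX : ∀ e, X e ≤ (√κ * |drop F e| + Z e) ^ 2) :
    ∑ ω, √((∑ v, T.charge ω v * F v) ^ 2 + ∑ e, (T.weight ω e : ℝ) ^ 2 * X e) ≤
      Fintype.card T.Ω * ∑ e, ((1 + √2 / 2) * |drop F e| + Z e) := by
  have hω (ω) : √((∑ v, T.charge ω v * F v) ^ 2 + ∑ e, (T.weight ω e : ℝ) ^ 2 * X e) ≤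
      √((∑ v, T.charge ω v * F v) ^ 2 + κ * ∑ e, (T.weight ω e * drop F e) ^ 2) +
        ∑ e, T.weight ω e * Z e := by
    have hsq : κ * ∑ e, (T.weight ω e * drop F e) ^ 2 =
        ∑ e, (T.weight ω e * (√κ * |drop F e|)) ^ 2 := by
      rw [mul_sum]
      refine sum_congr rfl fun e _ ↦ ?_
      rw [mul_pow, mul_pow, mul_pow, Real.sq_sqrt hκ, sq_abs]
      ring
    rw [hsq]
    refine sqrt_add_sum_le univ (sq_nonneg _) (fun e _ ↦ mul_nonneg (by positivity) (hZ e))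
      fun e _ ↦ ?_
    rw [← mul_add, mul_pow]
    exact mul_le_mul_of_nonneg_left (hX e) (sq_nonneg _)
  have hweight : ∑ ω, ∑ e, T.weight ω e * Z e = Fintype.card T.Ω * ∑ e, Z e := by
    rw [sum_comm, mul_sum]
    refine sum_congr rfl fun e _ ↦ ?_
    rw [← sum_mul, ← T.sum_weight e, Nat.cast_sum]
  calc _ ≤ _ := sum_le_sum fun ω _ ↦ hω ω
    _ ≤ (1 + √2 / 2) * (Fintype.card T.Ω * ∑ e, |drop F e|) + Fintype.card T.Ω * ∑ e, Z e := by
        rw [sum_add_distrib, hweight]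
        gcongr
        exact T.sum_sqrt_le F
    _ = _ := by rw [sum_add_distrib, ← mul_sum]; ring

lemma sum_sqrt_slashExtend_le (T : TestFamily G 1 h) (F : (G.slash diamond).V → ℝ) :
    ∑ ω, √((∑ v, T.charge ω v * F (G.oldVertex v)) ^ 2 + ∑ e, (T.weight ω e : ℝ) ^ 2 *
      ((∑ σ, (drop F (G.firstHalf e σ) ^ 2 + drop F (G.secondHalf e σ) ^ 2)) / 2)) ≤
      (1 + √2 / 2) * (Fintype.card T.Ω * ((∑ i, |drop F i|) / 2)) := by
  let τ (e : G.ι) : ℝ := (∑ σ, detour F e σ) / 2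
  have hX (e) : (∑ σ, (drop F (G.firstHalf e σ) ^ 2 + drop F (G.secondHalf e σ) ^ 2)) / 2 ≤
      (√1 * |drop (F ∘ G.oldVertex) e| + (1 + √2 / 2) * τ e) ^ 2 := by
    rw [Real.sqrt_one, one_mul]
    calc _ ≤ ((|drop (F ∘ G.oldVertex) e| + detour F e 1) ^ 2 +
          (|drop (F ∘ G.oldVertex) e| + detour F e (-1)) ^ 2) / 2 := by
          rw [sum_intUnits]
          gcongr <;> exact drop_sq_add_drop_sq_le F e _
      _ ≤ _ := sq_add_sq_div_two_le (abs_nonneg _) (detour_nonneg F e 1) (detour_nonneg F e (-1))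
      _ = _ := by simp only [τ, sum_intUnits]
  refine (T.sum_sqrt_add_sum_le zero_le_one _ (fun e ↦ ?_) hX).trans_eq ?_
  · have := sum_nonneg fun σ (_ : σ ∈ univ) ↦ detour_nonneg F e σ
    positivity
  · simp only [sum_abs_drop_slash_diamond, mul_div_cancel_left₀ _ (two_ne_zero (α := ℝ)), τ,
      ← mul_add, ← mul_sum]
    ring

/-- Spreading each weight evenly over the copy of `D` that replaces its edge. -/
noncomputable def spread (T : TestFamily G 1 h) : TestFamily (G.slash diamond) 2 h where
  Ω := T.Ω
  weight ω i := T.weight ω (G.parent i)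
  charge ω := G.slashExtend (fun v ↦ 2 * T.charge ω v) 0
  sum_charge ω := by simp [sum_vertex_slash_diamond, ← mul_sum, T.sum_charge]
  sum_weight i := T.sum_weight (G.parent i)
  sum_weight_mul_len ω := by
    rw [totalLength_slash_diamond, ← T.sum_weight_mul_len ω, sum_edge_slash_diamond, mul_sum]
    refine sum_congr rfl fun e _ ↦ ?_
    simp only [parent_firstHalf, parent_secondHalf, len_slash_diamond, sum_intUnits]
    ring
  sum_sqrt_le F := by
    have hω (ω) : √((∑ v, (G.slashExtend (fun v ↦ 2 * T.charge ω v) 0 v : ℤ) * F v) ^ 2 +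
        2 * ∑ i, (T.weight ω (G.parent i) * drop F i) ^ 2) =
        2 * √((∑ v, T.charge ω v * F (G.oldVertex v)) ^ 2 + ∑ e, (T.weight ω e : ℝ) ^ 2 *
          ((∑ σ, (drop F (G.firstHalf e σ) ^ 2 + drop F (G.secondHalf e σ) ^ 2)) / 2)) := by
      rw [← sqrt_sq_two_mul, sum_slashExtend_two_mul, sum_edge_slash_diamond]
      simp only [Pi.zero_apply, Int.cast_zero, zero_mul, sum_const_zero, add_zero, mul_pow, mul_add]
      congr 2
      rw [mul_sum, mul_sum]
      refine sum_congr rfl fun e _ ↦ ?_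
      simp only [parent_firstHalf, parent_secondHalf, sum_intUnits]
      ring
    calc _ = _ := sum_congr rfl fun ω _ ↦ hω ω
      _ ≤ _ := by
        rw [← mul_sum]
        linarith [T.sum_sqrt_slashExtend_le F]
  exists_dual ω := by
    obtain ⟨F, hlip, hweight, hval⟩ := T.exists_dual ω
    refine ⟨G.slashExtend F fun e _ ↦ (F (G.src e) + F (G.dst e)) / 2,
      forall_edge_slash_diamond.2 fun e σ ↦ ?_, forall_edge_slash_diamond.2 fun e σ ↦ ?_, ?_⟩
    · have h := abs_le.1 (hlip e)
      simp only [drop, abs_le, len_slash_diamond, src_firstHalf, dst_firstHalf, src_secondHalf,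
        dst_secondHalf, parent_firstHalf, parent_secondHalf, slashExtend_oldVertex,
        slashExtend_midpt] at h ⊢
      constructor <;> constructor <;> linarith
    · constructor <;> intro he <;> simp [hweight e he]
    · rw [sum_slashExtend_two_mul, totalLength_slash_diamond]
      simp only [slashExtend_oldVertex, hval, Pi.zero_apply, Int.cast_zero, zero_mul,
        sum_const_zero]
      ring

lemma sum_side_sum_sqrt_le (T : TestFamily G 2 h) (F : (G.slash diamond).V → ℝ) :
    ∑ ρ, ∑ ω, √((∑ v, T.charge ω v * F (G.oldVertex v)) ^ 2 + ∑ e, (T.weight ω e : ℝ) ^ 2 *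
      ((F (G.midpt e 1) - F (G.midpt e (-1))) ^ 2 +
        (drop F (G.firstHalf e ρ) ^ 2 + drop F (G.secondHalf e ρ) ^ 2))) ≤
      (1 + √2 / 2) * (Fintype.card T.Ω * ∑ i, |drop F i|) := by
  let τ (e : G.ι) : ℝ := (∑ σ, detour F e σ) / 2
  have hdetour (e σ) : 0 ≤ detour F e σ := detour_nonneg F e σ
  have hτ (e σ) : detour F e σ ≤ 2 * τ e := by
    simpa only [τ, mul_div_cancel₀ _ (two_ne_zero (α := ℝ))] using
      single_le_sum (fun σ _ ↦ hdetour e σ) (mem_univ σ)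
  have hX (ρ e) : (F (G.midpt e 1) - F (G.midpt e (-1))) ^ 2 +
      (drop F (G.firstHalf e ρ) ^ 2 + drop F (G.secondHalf e ρ) ^ 2) ≤
      (√2 * |drop (F ∘ G.oldVertex) e| + (τ e + √2 / 2 * detour F e ρ)) ^ 2 := by
    refine le_trans (add_le_add ?_ (drop_sq_add_drop_sq_le F e ρ))
      (sq_add_sq_le_sqrt_two (abs_nonneg _) (hdetour e ρ) (hτ e ρ))
    rw [← sq_abs (F (G.midpt e 1) - F (G.midpt e (-1)))]
    exact pow_le_pow_left₀ (abs_nonneg _) (abs_midpt_sub_midpt_le F e) 2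
  have hZ (ρ e) : 0 ≤ τ e + √2 / 2 * detour F e ρ := by
    have hτ_nonneg : 0 ≤ τ e := div_nonneg (sum_nonneg fun σ _ ↦ hdetour e σ) zero_le_two
    exact add_nonneg hτ_nonneg (mul_nonneg (by positivity) (hdetour e ρ))
  refine (sum_le_sum fun ρ _ ↦ T.sum_sqrt_add_sum_le zero_le_two _ (hZ ρ) (hX ρ)).trans_eq ?_
  rw [← mul_sum, sum_comm, sum_abs_drop_slash_diamond, mul_left_comm, mul_sum (a := 2),
    mul_sum (a := 1 + √2 / 2)]
  congr 1
  refine sum_congr rfl fun e _ ↦ ?_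
  simp only [sum_intUnits, τ]
  ring

section Concentrate

variable (T : TestFamily G κ h) (ω : T.Ω) (ρ : ℤˣ) (ε : G.ι → ℤˣ)

/-- The weights `T.weight ω`, doubled and moved to the side `ρ` of each copy of `D`. -/
def sideWeight (i : (G.slash diamond).ι) : ℕ :=
  if G.side i = ρ then 2 * T.weight ω (G.parent i) else 0

/-- The charge `T.charge ω`, doubled, together with a dipole on the two midpoints of each copy of
`D`, with signs given by `ε`. -/
def dipoleCharge : (G.slash diamond).V → ℤ :=
  G.slashExtend (fun v ↦ 2 * T.charge ω v) fun e σ ↦ 2 * T.weight ω e * ε e * σ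

@[simp] lemma sideWeight_firstHalf (e σ) :
    T.sideWeight ω ρ (G.firstHalf e σ) = if σ = ρ then 2 * T.weight ω e else 0 := by
  simp [sideWeight]

@[simp] lemma sideWeight_secondHalf (e σ) :
    T.sideWeight ω ρ (G.secondHalf e σ) = if σ = ρ then 2 * T.weight ω e else 0 := by
  simp [sideWeight]

lemma sum_sum_sideWeight (i) : ∑ ω, ∑ ρ, T.sideWeight ω ρ i = 2 * Fintype.card T.Ω := by
  simp only [sideWeight, sum_ite_eq, mem_univ, if_true, ← mul_sum, T.sum_weight]

lemma sum_dipoleCharge_mul (F : (G.slash diamond).V → ℝ) :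
    ∑ v, T.dipoleCharge ω ε v * F v = 2 * (∑ v, T.charge ω v * F (G.oldVertex v) +
      ∑ e, ε e • (T.weight ω e * (F (G.midpt e 1) - F (G.midpt e (-1))))) := by
  rw [dipoleCharge, sum_slashExtend_two_mul, mul_add]
  congr 1
  rw [mul_sum]
  refine sum_congr rfl fun e _ ↦ ?_
  simp only [sum_intUnits, Units.smul_def, zsmul_eq_mul]
  push_cast
  ring

lemma sum_sideWeight_mul_sq (x : (G.slash diamond).ι → ℝ) :
    ∑ i, (T.sideWeight ω ρ i * x i) ^ 2 = 2 ^ 2 * ∑ e, (T.weight ω e : ℝ) ^ 2 *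
      (x (G.firstHalf e ρ) ^ 2 + x (G.secondHalf e ρ) ^ 2) := by
  rw [sum_edge_slash_diamond, mul_sum]
  refine sum_congr rfl fun e _ ↦ ?_
  rw [Fintype.sum_eq_single ρ fun σ hσ ↦ by simp [hσ]]
  simp only [sideWeight_firstHalf, sideWeight_secondHalf, if_true]
  push_cast
  ring

lemma sum_signs_sqrt_dipoleCharge_le (F : (G.slash diamond).V → ℝ) :
    ∑ ε, √((∑ v, T.dipoleCharge ω ε v * F v) ^ 2 +
      1 * ∑ i, (T.sideWeight ω ρ i * drop F i) ^ 2) ≤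
    2 * (Fintype.card (G.ι → ℤˣ) *
      √((∑ v, T.charge ω v * F (G.oldVertex v)) ^ 2 + ∑ e, (T.weight ω e : ℝ) ^ 2 *
        ((F (G.midpt e 1) - F (G.midpt e (-1))) ^ 2 +
          (drop F (G.firstHalf e ρ) ^ 2 + drop F (G.secondHalf e ρ) ^ 2)))) := by
  simp only [one_mul, sum_dipoleCharge_mul, sum_sideWeight_mul_sq, mul_pow (2 : ℝ), ← mul_add,
    sqrt_sq_two_mul, ← mul_sum]
  refine mul_le_mul_of_nonneg_left ?_ zero_le_two
  refine (sum_signs_sqrt_le (by positivity) _ _).trans_eq ?_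
  simp only [mul_pow, add_assoc, ← sum_add_distrib, ← mul_add]

/-- The correction at the midpoints of `G ⊘ D` that turns a dual function of `T.charge ω` into one
of `T.dipoleCharge ω ε`; it vanishes on the side `ρ`, where the new weights are. -/
noncomputable def dualBump (e : G.ι) (σ : ℤˣ) : ℝ :=
  if T.weight ω e = 0 ∨ σ = ρ then 0 else ε e • σ • (G.len e / 2)

lemma abs_dualBump_le {F : G.V → ℝ} (hlip : ∀ e, |drop F e| ≤ G.len e)
    (hweight : ∀ e, T.weight ω e ≠ 0 → F (G.src e) = F (G.dst e)) (e : G.ι) (σ : ℤˣ) :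
    |T.dualBump ω ρ ε e σ| ≤ (G.len e - |drop F e|) / 2 := by
  by_cases hw : T.weight ω e = 0 ∨ σ = ρ
  · simp only [dualBump, hw, if_true, abs_zero]
    linarith [hlip e]
  · have hdrop : drop F e = 0 := sub_eq_zero.2 (hweight e fun h ↦ hw (.inl h))
    have hpos : 0 ≤ G.len e := (abs_nonneg _).trans (hlip e)
    simp only [dualBump, hw, if_false, hdrop, abs_zero, sub_zero]
    rw [← Real.norm_eq_abs, norm_units_zsmul, norm_units_zsmul, Real.norm_of_nonneg (by positivity)]

lemma smul_weight_mul_dualBump_sub (e : G.ι) :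
    ε e • (T.weight ω e * (T.dualBump ω ρ ε e 1 - T.dualBump ω ρ ε e (-1))) =
      T.weight ω e * G.len e / 2 := by
  by_cases hw : T.weight ω e = 0
  · simp [hw]
  · rcases Int.units_eq_one_or (ε e) with h | h <;>
      rcases Int.units_eq_one_or ρ with rfl | rfl <;> simp [dualBump, hw, h] <;> ring

lemma exists_dual_dipoleCharge : ∃ F : (G.slash diamond).V → ℝ,
    (∀ i, |drop F i| ≤ (G.slash diamond).len i) ∧
    (∀ i, T.sideWeight ω ρ i ≠ 0 → F ((G.slash diamond).src i) = F ((G.slash diamond).dst i)) ∧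
    ∑ v, T.dipoleCharge ω ε v * F v = (h + 1 / 2) * (G.slash diamond).totalLength := by
  obtain ⟨F, hlip, hweight, hval⟩ := T.exists_dual ω
  refine ⟨G.slashExtend F fun e σ ↦ (F (G.src e) + F (G.dst e)) / 2 + T.dualBump ω ρ ε e σ,
      forall_edge_slash_diamond.2 fun e σ ↦ ?_, forall_edge_slash_diamond.2 fun e σ ↦ ?_, ?_⟩
  · have hbump := abs_le.1 (T.abs_dualBump_le ω ρ ε hlip hweight e σ)
    have hle := le_abs_self (drop F e)
    have hge := neg_abs_le (drop F e)
    simp only [drop, abs_le, len_slash_diamond, src_firstHalf, dst_firstHalf, src_secondHalf,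
      dst_secondHalf, parent_firstHalf, parent_secondHalf, slashExtend_oldVertex,
      slashExtend_midpt] at hbump hle hge ⊢
    constructor <;> constructor <;> linarith
  · simp only [sideWeight_firstHalf, sideWeight_secondHalf]
    constructor <;> intro hne <;> obtain ⟨rfl, he⟩ := ite_ne_right_iff.1 hne <;>
      have := hweight e (by omega) <;> simp [dualBump, this]
  · rw [sum_dipoleCharge_mul, totalLength_slash_diamond]
    simp only [slashExtend_oldVertex, slashExtend_midpt, hval, add_sub_add_left_eq_sub,
      smul_weight_mul_dualBump_sub]
    rw [← sum_div, T.sum_weight_mul_len]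
    ring

end Concentrate

/-- Moving the weights to a random side of each copy of `D` and adding to the charge random
dipoles, which the remaining sides transport. -/
noncomputable def concentrate (T : TestFamily G 2 h) :
    TestFamily (G.slash diamond) 1 (h + 1 / 2) where
  Ω := T.Ω × ℤˣ × (G.ι → ℤˣ)
  weight ω := T.sideWeight ω.1 ω.2.1
  charge ω := T.dipoleCharge ω.1 ω.2.2
  sum_charge ω := by
    have hT : ∑ v, (T.charge ω.1 v : ℝ) = 0 := by exact_mod_cast T.sum_charge ω.1
    have := T.sum_dipoleCharge_mul ω.1 ω.2.2 fun _ ↦ 1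
    simp only [mul_one, hT, sub_self, mul_zero, smul_zero, sum_const_zero, add_zero] at this
    exact_mod_cast this
  sum_weight i := by
    simp only [Fintype.sum_prod_type, sum_const, smul_eq_mul, ← mul_sum, sum_sum_sideWeight,
      Fintype.card_prod, Fintype.card_units_int, card_univ]
    ring
  sum_weight_mul_len ω := by
    rw [totalLength_slash_diamond, ← T.sum_weight_mul_len ω.1, sum_edge_slash_diamond, mul_sum]
    refine sum_congr rfl fun e _ ↦ ?_
    rw [Fintype.sum_eq_single ω.2.1 fun σ hσ ↦ by simp [hσ]]
    simp only [sideWeight_firstHalf, sideWeight_secondHalf, parent_firstHalf, parent_secondHalf,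
      len_slash_diamond, if_true]
    push_cast
    ring
  sum_sqrt_le F := by
    simp only [Fintype.sum_prod_type]
    rw [sum_comm]
    calc _ ≤ _ := sum_le_sum fun ρ _ ↦ sum_le_sum fun ω _ ↦ T.sum_signs_sqrt_dipoleCharge_le ω ρ F
      _ ≤ 2 * (Fintype.card (G.ι → ℤˣ) *
          ((1 + √2 / 2) * (Fintype.card T.Ω * ∑ i, |drop F i|))) := by
        simp only [← mul_sum]
        gcongr
        exact T.sum_side_sum_sqrt_le F
      _ = _ := by
        rw [Fintype.card_prod, Fintype.card_prod, Fintype.card_units_int]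
        push_cast
        ring
  exists_dual ω := T.exists_dual_dipoleCharge ω.1 ω.2.1 ω.2.2

lemma nonempty_slashPow_two_mul (k : ℕ) :
    Nonempty (TestFamily (diamond.slashPow (2 * k)) 2 (k / 2)) := by
  induction k with
  | zero =>
    rw [Nat.cast_zero, zero_div]
    exact ⟨edgeGraph⟩
  | succ k ih =>
    obtain ⟨T⟩ := ih
    have hk : ((k + 1 : ℕ) : ℝ) / 2 = k / 2 + 1 / 2 := by push_cast; ring
    exact ⟨hk ▸ T.concentrate.spread⟩

lemma exists_nonempty_slashPow (n : ℕ) : ∃ κ h : ℝ, 0 ≤ κ ∧ n / 4 ≤ h ∧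
    Nonempty (TestFamily (diamond.slashPow n) κ h) := by
  rcases n.even_or_odd' with ⟨k, rfl | rfl⟩ <;> obtain ⟨T⟩ := nonempty_slashPow_two_mul k
  · exact ⟨2, k / 2, zero_le_two, by push_cast; linarith, ⟨T⟩⟩
  · exact ⟨1, k / 2 + 1 / 2, zero_le_one, by push_cast; linarith, ⟨T.concentrate⟩⟩

lemma sum_abs_map_charge_le (T : TestFamily G κ h) (hκ : 0 ≤ κ) (L : (G.V → ℤ) →+ ℝ) :
    ∑ ω, |L (T.charge ω)| ≤ (1 + √2 / 2) * Fintype.card T.Ω *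
      ∑ e, |L (Pi.single (G.src e) 1 - Pi.single (G.dst e) 1)| := by
  let F (v : G.V) : ℝ := L (Pi.single v 1)
  have hL (k : G.V → ℤ) : L k = ∑ v, k v * F v := by
    conv_lhs => rw [← univ_sum_single k, map_sum]
    refine sum_congr rfl fun v _ ↦ ?_
    rw [← zsmul_eq_mul, ← map_zsmul, ← Pi.single_smul', smul_eq_mul, mul_one]
  calc ∑ ω, |L (T.charge ω)|
      ≤ ∑ ω, √((∑ v, T.charge ω v * F v) ^ 2 + κ * ∑ e, (T.weight ω e * drop F e) ^ 2) := by
        refine sum_le_sum fun ω _ ↦ Real.abs_le_sqrt ?_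
        rw [hL]
        exact le_add_of_nonneg_right (by positivity)
    _ ≤ (1 + √2 / 2) * (Fintype.card T.Ω * ∑ e, |drop F e|) := T.sum_sqrt_le F
    _ = _ := by simp only [← mul_assoc, map_sub, drop, F]

lemma mul_totalLength_le_TCnorm_nsmul_charge (T : TestFamily G κ h) (hG : G.Connected) (ω : T.Ω)
    (R : ℕ) :
    R * (h * G.totalLength) ≤ TCnorm G.gdist (recenter G.s (R • T.charge ω)).1 := by
  obtain ⟨F, hF, -, hFω⟩ := T.exists_dual ω
  refine le_of_eq_of_le ?_ (sum_mul_le_TCnorm G.s (hG.sub_le_gdist hF) (recenter _ _).2)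
  rw [recenter_coe_of_sum_eq_zero _ (by simp [← mul_sum, T.sum_charge]), ← hFω, mul_sum]
  simp [mul_assoc]

lemma le_mul_of_bilipschitz (T : TestFamily G κ h) (hκ : 0 ≤ κ) (hG : G.Connected)
    (hlen : ∀ e, 0 ≤ G.len e) (hpos : 0 < G.totalLength)
    {Ω : Type*} {_ : MeasurableSpace Ω} {ν : Measure Ω} {D : ℝ} (hD : 0 ≤ D)
    {f : {μ : G.V → ℝ // ∑ x, μ x = 0} → Lp ℝ 1 ν}
    (hf : ∀ μ μ', TCnorm G.gdist (fun x ↦ μ.1 x - μ'.1 x) ≤ dist (f μ) (f μ') ∧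
      dist (f μ) (f μ') ≤ D * TCnorm G.gdist (fun x ↦ μ.1 x - μ'.1 x)) :
    h ≤ (1 + √2 / 2) * D := by
  have hlower (ω) (R : ℕ) (k : G.V → ℤ) : R * (h * G.totalLength) ≤
      ‖Δ_[R • T.charge ω] (f ∘ recenter G.s) k‖ := by
    refine (T.mul_totalLength_le_TCnorm_nsmul_charge hG ω R).trans ?_
    rw [fwdDiff, ← dist_eq_norm, ← recenter_add_sub G.s k]
    exact (hf _ _).1
  have hupper (w k : G.V → ℤ) : ‖Δ_[w] (f ∘ recenter G.s) k‖ ≤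
      D * TCnorm G.gdist (recenter G.s w).1 := by
    rw [fwdDiff, ← dist_eq_norm, ← recenter_add_sub G.s k]
    exact (hf _ _).2
  have hedge (e : G.ι) : TCnorm G.gdist
      (recenter G.s (Pi.single (G.src e) 1 - Pi.single (G.dst e) 1)).1 ≤ G.len e := by
    rw [recenter_coe_of_sum_eq_zero _ (by simp)]
    refine (le_of_eq ?_).trans ((TCnorm_single_sub_single_le (gdist_nonneg hlen) _ _).trans
      (gdist_src_dst_le hlen e))
    congr 1 with v
    simp [Pi.single_apply]
  have key : Fintype.card T.Ω * (h * G.totalLength) ≤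
      (1 + √2 / 2) * Fintype.card T.Ω * (D * G.totalLength) := by
    calc Fintype.card T.Ω * (h * G.totalLength) = ∑ _ : T.Ω, h * G.totalLength := by simp
      _ ≤ (1 + √2 / 2) * Fintype.card T.Ω * ∑ e : G.ι, D * TCnorm G.gdist
            (recenter G.s (Pi.single (G.src e) 1 - Pi.single (G.dst e) 1)).1 :=
          sum_le_of_forall_addMonoidHom (by positivity)
            (sum_norm_le_of_forall_real (T.sum_abs_map_charge_le hκ)) hupper hlower
      _ ≤ _ := by
          rw [← mul_sum, totalLength]
          gcongr
          exact hedge _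
  have hcard : (0 : ℝ) < Fintype.card T.Ω := by exact_mod_cast Fintype.card_pos
  refine le_of_mul_le_mul_right ?_ (mul_pos hcard hpos)
  linarith

end TestFamily

/-- For every `n ≥ 0`, the diamond graphs satisfy
`c₁(TC(D^{⊘n})) ≥ ((2−√2)/4)·n`. -/
theorem c1_TC_diamond_lower (n : ℕ) :
    c1TC (diamond.slashPow n).gdist ≥ (2 - Real.sqrt 2) / 4 * n := by
  have hlen (e) : (0 : ℝ) ≤ (diamond.slashPow n).len e := by
    rw [len_slashPow_diamond]; positivity
  refine le_c1TC (gdist_nonneg hlen) (r := (1 / 2) ^ n) (by positivity) (fun x y hxy ↦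
    (connected_slashPow_diamond n).le_gdist_of_ne (by positivity)
      (fun e ↦ (len_slashPow_diamond n e).ge) hxy) (diamond.slashPow n).s ?_
  intro D hD Ω _ ν f hf
  obtain ⟨κ, h, hκ, hnh, ⟨T⟩⟩ := TestFamily.exists_nonempty_slashPow n
  have hhD : h ≤ (1 + √2 / 2) * D := T.le_mul_of_bilipschitz hκ (connected_slashPow_diamond n) hlen
    (by rw [totalLength_slashPow_diamond]; positivity) (zero_le_one.trans hD) hf
  have hsqrt : √2 ≤ 2 := Real.sqrt_le_iff.2 ⟨zero_le_two, by norm_num⟩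
  calc (2 - √2) / 4 * n = (2 - √2) * (n / 4) := by ring
    _ ≤ (2 - √2) * ((1 + √2 / 2) * D) := by
        exact mul_le_mul_of_nonneg_left (hnh.trans hhD) (sub_nonneg.2 hsqrt)
    _ = (2 - √2 ^ 2 / 2) * D := by ring
    _ = D := by rw [Real.sq_sqrt zero_le_two]; ring
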